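/- (Lemma C.1, Lipschitz properties of minimizers of the proximally regularized function) Let p > l and define f̂(x, y; z) := f(x, y) + (p/2)·‖x − z‖². For each (y, z) let x*(y, z) be the unique minimizer of x ↦ f̂(x, y; z) (unique by (p − l)-strong convexity), and for each z let x*(z) be the unique minimizer of x ↦ max_y f̂(x, y; z). Set γ₁ := p/(p − l) and γ₂ := (l + p)/(p − l). Then for all y, y', z, z': (i) ‖x*(y, z) − x*(y, z')‖ ≤ γ₁·‖z − z'‖; (ii) ‖x*(z) − x*(z')‖ ≤ γ₁·‖z − z'‖; (iii) ‖x*(y, z) − x*(y', z)‖ ≤ γ₂·‖y − y'‖. -/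

import Mathlib

open MeasureTheory Real

/-- Partial gradient of `f` in the first (primal) variable. -/
noncomputable def gradx {d1 d2 : ℕ}
    (f : EuclideanSpace ℝ (Fin d1) → EuclideanSpace ℝ (Fin d2) → ℝ)
    (x : EuclideanSpace ℝ (Fin d1)) (y : EuclideanSpace ℝ (Fin d2)) :
    EuclideanSpace ℝ (Fin d1) :=
  gradient (fun x' => f x' y) x

/-- Partial gradient of `f` in the second (dual) variable. -/
noncomputable def grady {d1 d2 : ℕ}
    (f : EuclideanSpace ℝ (Fin d1) → EuclideanSpace ℝ (Fin d2) → ℝ)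
    (x : EuclideanSpace ℝ (Fin d1)) (y : EuclideanSpace ℝ (Fin d2)) :
    EuclideanSpace ℝ (Fin d2) :=
  gradient (f x) y

/-- The primal function `Φ(x) = max_y f(x,y)`. -/
noncomputable def primal {d1 d2 : ℕ}
    (f : EuclideanSpace ℝ (Fin d1) → EuclideanSpace ℝ (Fin d2) → ℝ)
    (x : EuclideanSpace ℝ (Fin d1)) : ℝ :=
  ⨆ y, f x y

/-!
A minimizer of an `m`-strongly convex function comes with quadratic growth. Adding the growth
inequalities of two such functions `ψ₁`, `ψ₂` at each other's minimizers `a`, `b` gives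
`m ‖a - b‖² ≤ (ψ₁ - ψ₂) b - (ψ₁ - ψ₂) a`, so `‖a - b‖ ≤ K / m` when `ψ₁ - ψ₂` is `K`-Lipschitz.
All three bounds are instances with `m = p - l`. Changing `z` to `z'` perturbs the proximal
objective by an affine function of slope `p ‖z - z'‖`; this applies to `max_y f` too, since suprema
inherit `l`-weak convexity, which is encoded as `StrongConvexOn s (-l)`. Changing `y` to `y'`
perturbs it by `f(·, y) - f(·, y')`, whose Lipschitz constant is at most `l ‖y - y'‖`, so the third
constant can in fact be taken to be `l / (p - l)`.
-/

open Set Filter Topology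

section StrongConvexity

variable {E : Type*} [NormedAddCommGroup E] [NormedSpace ℝ E] {s : Set E} {φ : E → ℝ}
  {φ' : E → E →L[ℝ] ℝ} {m l : ℝ}

lemma strongConvexOn_of_monotone_derivWithin {D : Set ℝ} {h h' : ℝ → ℝ} (hD : Convex ℝ D)
    (hh : ∀ t ∈ D, HasDerivWithinAt h (h' t) D t)
    (hmono : ∀ t ∈ D, ∀ u ∈ D, t < u → m * (u - t) ≤ h' u - h' t) : StrongConvexOn D m h := by
  rw [strongConvexOn_iff_convex]
  have hderivWithin : ∀ t ∈ D,
      HasDerivWithinAt (fun t => h t - m / 2 * ‖t‖ ^ 2) (h' t - m * t) D t := fun t ht => by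
    have hsq : HasDerivAt (fun t : ℝ => m / 2 * ‖t‖ ^ 2) (m * t) t := by
      simp only [Real.norm_eq_abs, sq_abs]
      exact ((hasDerivAt_pow 2 t).const_mul (m / 2)).congr_deriv (by push_cast; ring)
    exact (hh t ht).sub hsq.hasDerivWithinAt
  have hderiv : ∀ t ∈ interior D,
      HasDerivAt (fun t => h t - m / 2 * ‖t‖ ^ 2) (h' t - m * t) t := fun t ht =>
    (hderivWithin t (interior_subset ht)).hasDerivAt (mem_interior_iff_mem_nhds.1 ht)
  have hmono_sub : MonotoneOn (fun t => h' t - m * t) D := fun t ht u hu htu => by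
    rcases htu.eq_or_lt with rfl | htu
    · rfl
    · linarith [hmono t ht u hu htu]
  exact MonotoneOn.convexOn_of_deriv hD (fun t ht => (hderivWithin t ht).continuousWithinAt)
    (fun t ht => (hderiv t ht).differentiableAt.differentiableWithinAt)
    ((hmono_sub.mono interior_subset).congr fun t ht => (hderiv t ht).deriv.symm)

lemma strongConvexOn_of_comp_lineMap (hs : Convex ℝ s)
    (hline : ∀ x ∈ s, ∀ y ∈ s,
      StrongConvexOn (Icc (0 : ℝ) 1) (m * ‖y - x‖ ^ 2) (φ ∘ AffineMap.lineMap x y)) :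
    StrongConvexOn s m φ := by
  refine ⟨hs, fun x hx y hy a b ha hb hab => ?_⟩
  have hconv := (hline x hx y hy).2 (left_mem_Icc.2 zero_le_one) (right_mem_Icc.2 zero_le_one)
    ha hb hab
  have hpoint : AffineMap.lineMap x y b = a • x + b • y := by
    rw [AffineMap.lineMap_apply_module, ← hab, add_sub_cancel_right]
  simp only [Function.comp_apply, smul_eq_mul, mul_zero, mul_one, zero_add, hpoint,
    AffineMap.lineMap_apply_zero, AffineMap.lineMap_apply_one, zero_sub, norm_neg, norm_one,
    one_pow] at hconv
  rw [norm_sub_rev x y, smul_eq_mul, smul_eq_mul]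
  linarith

lemma strongConvexOn_of_monotone_fderivWithin (hs : Convex ℝ s)
    (hφ : ∀ x ∈ s, HasFDerivWithinAt φ (φ' x) s x)
    (hmono : ∀ x ∈ s, ∀ y ∈ s, m * ‖x - y‖ ^ 2 ≤ (φ' x - φ' y) (x - y)) :
    StrongConvexOn s m φ := by
  refine strongConvexOn_of_comp_lineMap hs fun x hx y hy => ?_
  have hmaps : MapsTo (AffineMap.lineMap x y) (Icc (0 : ℝ) 1) s := hs.mapsTo_lineMap hx hy
  refine strongConvexOn_of_monotone_derivWithin (convex_Icc 0 1)
    (fun t ht => (hφ _ (hmaps ht)).comp_hasDerivWithinAt t AffineMap.hasDerivWithinAt_lineMap hmaps)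
    fun t ht u hu htu => ?_
  have hsub : (AffineMap.lineMap x y u : E) - AffineMap.lineMap x y t = (u - t) • (y - x) := by
    simp only [AffineMap.lineMap_apply_module']
    module
  have hmono_tu := hmono _ (hmaps hu) _ (hmaps ht)
  rw [hsub, norm_smul, mul_pow, Real.norm_eq_abs, sq_abs, map_smul, smul_eq_mul,
    sub_apply] at hmono_tu
  refine le_of_mul_le_mul_left ?_ (sub_pos.2 htu)
  linarith

lemma strongConvexOn_neg_of_lipschitz_fderivWithin (hs : Convex ℝ s)
    (hφ : ∀ x ∈ s, HasFDerivWithinAt φ (φ' x) s x)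
    (hlip : ∀ x ∈ s, ∀ y ∈ s, ‖φ' x - φ' y‖ ≤ l * ‖x - y‖) :
    StrongConvexOn s (-l) φ := by
  refine strongConvexOn_of_monotone_fderivWithin hs hφ fun x hx y hy => ?_
  have hbound : ‖(φ' x - φ' y) (x - y)‖ ≤ l * ‖x - y‖ * ‖x - y‖ :=
    (φ' x - φ' y).le_of_opNorm_le (hlip x hx y hy) (x - y)
  linarith [neg_le_of_abs_le hbound]

lemma sub_sub_sub_le_of_norm_fderivWithin_sub_le {ψ : E → ℝ} {ψ' : E → E →L[ℝ] ℝ} {K : ℝ} {a b : E}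
    (hs : Convex ℝ s) (hφ : ∀ x ∈ s, HasFDerivWithinAt φ (φ' x) s x)
    (hψ : ∀ x ∈ s, HasFDerivWithinAt ψ (ψ' x) s x) (hK : ∀ x ∈ s, ‖φ' x - ψ' x‖ ≤ K)
    (has : a ∈ s) (hbs : b ∈ s) : φ b - ψ b - (φ a - ψ a) ≤ K * ‖a - b‖ := by
  rw [norm_sub_rev]
  exact (le_abs_self _).trans <| hs.norm_image_sub_le_of_norm_hasFDerivWithin_le
    (fun x hx => (hφ x hx).sub (hψ x hx)) hK has hbs

lemma uniformConvexOn_iSup {ι : Type*} [Nonempty ι] {ω : ℝ → ℝ} {F : ι → E → ℝ}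
    (hF : ∀ i, UniformConvexOn s ω (F i)) (hbdd : ∀ x ∈ s, BddAbove (range fun i => F i x)) :
    UniformConvexOn s ω fun x => ⨆ i, F i x := by
  refine ⟨(hF (Classical.arbitrary ι)).1, fun x hx y hy a b ha hb hab => ciSup_le fun i => ?_⟩
  calc F i (a • x + b • y)
      ≤ a • F i x + b • F i y - a * b * ω ‖x - y‖ := (hF i).2 hx hy ha hb hab
    _ ≤ a • (⨆ i, F i x) + b • (⨆ i, F i y) - a * b * ω ‖x - y‖ := by
      gcongr
      exacts [le_ciSup (hbdd x hx) i, le_ciSup (hbdd y hy) i]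

lemma quadratic_growth_of_isMinOn {a x : E} (hφ : StrongConvexOn s m φ) (ha : IsMinOn φ s a)
    (has : a ∈ s) (hxs : x ∈ s) : m / 2 * ‖x - a‖ ^ 2 ≤ φ x - φ a := by
  have hsegment : ∀ t ∈ Ioo (0 : ℝ) 1, (1 - t) * (m / 2 * ‖x - a‖ ^ 2) ≤ φ x - φ a := by
    rintro t ⟨ht0, ht1⟩
    have hconv := hφ.2 hxs has ht0.le (sub_pos.2 ht1).le (add_sub_cancel t 1)
    have hmin := isMinOn_iff.1 ha _
      (hφ.1 hxs has ht0.le (sub_pos.2 ht1).le (add_sub_cancel t 1))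
    simp only [smul_eq_mul] at hconv
    refine le_of_mul_le_mul_left ?_ ht0
    linarith
  have hlim : Tendsto (fun t : ℝ => (1 - t) * (m / 2 * ‖x - a‖ ^ 2)) (𝓝[>] 0)
      (𝓝 (m / 2 * ‖x - a‖ ^ 2)) :=
    tendsto_nhdsWithin_of_tendsto_nhds <| Continuous.tendsto' (by fun_prop) _ _ (by ring)
  exact le_of_tendsto hlim (mem_of_superset (Ioo_mem_nhdsGT zero_lt_one) hsegment)

lemma norm_sub_le_div_of_isMinOn {ψ₁ ψ₂ : E → ℝ} {a b : E} {K : ℝ} (hm : 0 < m) (hK : 0 ≤ K)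
    (hψ₁ : StrongConvexOn s m ψ₁) (hψ₂ : StrongConvexOn s m ψ₂) (has : a ∈ s) (hbs : b ∈ s)
    (ha : IsMinOn ψ₁ s a) (hb : IsMinOn ψ₂ s b)
    (hsub : ψ₁ b - ψ₂ b - (ψ₁ a - ψ₂ a) ≤ K * ‖a - b‖) : ‖a - b‖ ≤ K / m := by
  have hgrowth₁ := quadratic_growth_of_isMinOn hψ₁ ha has hbs
  have hgrowth₂ := quadratic_growth_of_isMinOn hψ₂ hb hbs has
  rw [norm_sub_rev] at hgrowth₁
  rw [le_div_iff₀' hm]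
  rcases (norm_nonneg (a - b)).eq_or_lt with hab | hab
  · simpa only [← hab, mul_zero] using hK
  · refine le_of_mul_le_mul_right ?_ hab
    linarith

end StrongConvexity

section Proximal

variable {E : Type*} [NormedAddCommGroup E] {s : Set E} {φ : E → ℝ} {l p : ℝ}

/-- The objective `φ + (p / 2) ‖· - z‖²` of the proximal problem for `φ` with centre `z`;
the paper's `f̂(·, y; z)` is the case `φ = f(·, y)`. -/
noncomputable def proxObjective (p : ℝ) (φ : E → ℝ) (z x : E) : ℝ :=
  φ x + p / 2 * ‖x - z‖ ^ 2

lemma iSup_proxObjective {ι : Type*} [Nonempty ι] {F : ι → E → ℝ} {x : E}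
    (hbdd : BddAbove (range fun i => F i x)) (p : ℝ) (z : E) :
    ⨆ i, proxObjective p (F i) z x = proxObjective p (fun x => ⨆ i, F i x) z x :=
  (ciSup_add hbdd _).symm

variable [InnerProductSpace ℝ E]

lemma strongConvexOn_proxObjective (hφ : StrongConvexOn s (-l) φ) (z : E) :
    StrongConvexOn s (p - l) (proxObjective p φ z) := by
  rw [strongConvexOn_iff_convex] at hφ ⊢
  have haffine : ConvexOn ℝ s fun x => (-p) • innerₛₗ ℝ z x + p / 2 * ‖z‖ ^ 2 :=
    (((-p) • innerₛₗ ℝ z).convexOn hφ.1).add_const _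
  refine (hφ.add haffine).congr fun x _ => ?_
  simp only [proxObjective, Pi.add_apply, innerₛₗ_apply_apply, smul_eq_mul, norm_sub_sq_real,
    real_inner_comm x z]
  ring

lemma proxObjective_sub_sub_proxObjective_sub (p : ℝ) (φ : E → ℝ) (z z' a b : E) :
    proxObjective p φ z b - proxObjective p φ z' b -
      (proxObjective p φ z a - proxObjective p φ z' a) = p * inner ℝ (a - b) (z - z') := by
  simp only [proxObjective, norm_sub_sq_real, inner_sub_left, inner_sub_right]
  ring

lemma norm_proxMinimizer_sub_le_of_center {z z' a b : E} (hp₀ : 0 ≤ p) (hlp : l < p)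
    (hφ : StrongConvexOn s (-l) φ) (has : a ∈ s) (hbs : b ∈ s)
    (ha : IsMinOn (proxObjective p φ z) s a) (hb : IsMinOn (proxObjective p φ z') s b) :
    ‖a - b‖ ≤ p / (p - l) * ‖z - z'‖ := by
  rw [div_mul_eq_mul_div]
  refine norm_sub_le_div_of_isMinOn (sub_pos.2 hlp) (by positivity)
    (strongConvexOn_proxObjective hφ z) (strongConvexOn_proxObjective hφ z') has hbs ha hb ?_
  calc _ = p * inner ℝ (a - b) (z - z') := proxObjective_sub_sub_proxObjective_sub p φ z z' a b
    _ ≤ p * (‖a - b‖ * ‖z - z'‖) := by gcongr; exact real_inner_le_norm _ _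
    _ = p * ‖z - z'‖ * ‖a - b‖ := by ring

lemma norm_proxMinimizer_sub_le_of_function {φ₁ φ₂ : E → ℝ} {K : ℝ} {z a b : E} (hK : 0 ≤ K)
    (hlp : l < p) (hφ₁ : StrongConvexOn s (-l) φ₁) (hφ₂ : StrongConvexOn s (-l) φ₂)
    (has : a ∈ s) (hbs : b ∈ s)
    (ha : IsMinOn (proxObjective p φ₁ z) s a) (hb : IsMinOn (proxObjective p φ₂ z) s b)
    (hsub : φ₁ b - φ₂ b - (φ₁ a - φ₂ a) ≤ K * ‖a - b‖) :
    ‖a - b‖ ≤ K / (p - l) := by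
  refine norm_sub_le_div_of_isMinOn (sub_pos.2 hlp) hK
    (strongConvexOn_proxObjective hφ₁ z) (strongConvexOn_proxObjective hφ₂ z) has hbs ha hb ?_
  simpa only [proxObjective, add_sub_add_right_eq_sub] using hsub

theorem proximal_minimizer_lipschitz_general {Y : Type*} [PseudoMetricSpace Y] [Nonempty Y]
    {f : E → Y → ℝ} {L : ℝ} (hL : 0 ≤ L) (hp₀ : 0 ≤ p) (hlp : l < p)
    (hweak : ∀ y, StrongConvexOn s (-l) fun x => f x y)
    (hmixed : ∀ y y', ∀ a ∈ s, ∀ b ∈ s,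
      f b y - f b y' - (f a y - f a y') ≤ L * dist y y' * ‖a - b‖)
    (hbdd : ∀ x ∈ s, BddAbove (range (f x)))
    {X : Y → E → E} (hXs : ∀ y z, X y z ∈ s)
    (hX : ∀ y z, IsMinOn (proxObjective p (fun x => f x y) z) s (X y z))
    {Xz : E → E} (hXzs : ∀ z, Xz z ∈ s)
    (hXz : ∀ z, IsMinOn (fun x => ⨆ y, proxObjective p (fun x => f x y) z x) s (Xz z)) :
    (∀ y z z', ‖X y z - X y z'‖ ≤ p / (p - l) * ‖z - z'‖) ∧
    (∀ z z', ‖Xz z - Xz z'‖ ≤ p / (p - l) * ‖z - z'‖) ∧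
    (∀ y y' z, ‖X y z - X y' z‖ ≤ L / (p - l) * dist y y') := by
  have hprimal : StrongConvexOn s (-l) fun x => ⨆ y, f x y := uniformConvexOn_iSup hweak hbdd
  have hXz_prox : ∀ z, IsMinOn (proxObjective p (fun x => ⨆ y, f x y) z) s (Xz z) := fun z =>
    (hXz z).congr (eventually_principal.2 fun x hx => iSup_proxObjective (hbdd x hx) p z)
      (iSup_proxObjective (hbdd _ (hXzs z)) p z)
  refine ⟨fun y z z' => ?_, fun z z' => ?_, fun y y' z => ?_⟩
  · exact norm_proxMinimizer_sub_le_of_center hp₀ hlp (hweak y) (hXs y z) (hXs y z') (hX y z)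
      (hX y z')
  · exact norm_proxMinimizer_sub_le_of_center hp₀ hlp hprimal (hXzs z) (hXzs z') (hXz_prox z)
      (hXz_prox z')
  · rw [div_mul_eq_mul_div]
    exact norm_proxMinimizer_sub_le_of_function (by positivity) hlp (hweak y) (hweak y') (hXs y z)
      (hXs y' z) (hX y z) (hX y' z) (hmixed y y' _ (hXs y z) _ (hXs y' z))

end Proximal

/-- **Lemma C.1 (Lipschitz properties of minimizers of the proximally regularized function).**
For `p > l` and `f̂(x,y;z) = f(x,y) + (p/2)‖x − z‖²`, the minimizers `x*(y,z)` of
`x ↦ f̂(x,y;z)` and `x*(z)` of `x ↦ max_y f̂(x,y;z)` satisfy the Lipschitz bounds with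
constants `γ₁ = p/(p−l)` and `γ₂ = (l+p)/(p−l)`. -/
theorem proximal_minimizer_lipschitz
    {d1 d2 : ℕ}
    (f : EuclideanSpace ℝ (Fin d1) → EuclideanSpace ℝ (Fin d2) → ℝ)
    (l μ : ℝ) (hl : 0 < l) (hμ : 0 < μ)
    (hdiff : Differentiable ℝ
      (fun q : EuclideanSpace ℝ (Fin d1) × EuclideanSpace ℝ (Fin d2) => f q.1 q.2))
    (hlipx : ∀ x₁ x₂ y₁ y₂,
      ‖gradx f x₁ y₁ - gradx f x₂ y₂‖ ≤ l * (‖x₁ - x₂‖ + ‖y₁ - y₂‖))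
    (hlipy : ∀ x₁ x₂ y₁ y₂,
      ‖grady f x₁ y₁ - grady f x₂ y₂‖ ≤ l * (‖x₁ - x₂‖ + ‖y₁ - y₂‖))
    (hattain : ∀ x, ∃ ys, ∀ y, f x y ≤ f x ys)
    (hPL : ∀ x y, 2 * μ * (primal f x - f x y) ≤ ‖grady f x y‖ ^ 2)
    (p : ℝ) (hp : l < p)
    (X : EuclideanSpace ℝ (Fin d2) → EuclideanSpace ℝ (Fin d1) → EuclideanSpace ℝ (Fin d1))
    (hX : ∀ y z x, f (X y z) y + (p / 2) * ‖X y z - z‖ ^ 2 ≤ f x y + (p / 2) * ‖x - z‖ ^ 2)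
    (Xz : EuclideanSpace ℝ (Fin d1) → EuclideanSpace ℝ (Fin d1))
    (hXz : ∀ z x, (⨆ y, f (Xz z) y + (p / 2) * ‖Xz z - z‖ ^ 2) ≤
      ⨆ y, f x y + (p / 2) * ‖x - z‖ ^ 2) :
    (∀ y z z', ‖X y z - X y z'‖ ≤ (p / (p - l)) * ‖z - z'‖) ∧
    (∀ z z', ‖Xz z - Xz z'‖ ≤ (p / (p - l)) * ‖z - z'‖) ∧
    (∀ y y' z, ‖X y z - X y' z‖ ≤ ((l + p) / (p - l)) * ‖y - y'‖) := by
  have hderiv : ∀ y, ∀ x ∈ univ, HasFDerivWithinAt (fun x => f x y)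
      (InnerProductSpace.toDual ℝ _ (gradx f x y)) univ x := fun y x _ =>
    (hdiff.comp (by fun_prop : Differentiable ℝ fun x => (x, y)) x).hasGradientAt.hasFDerivAt
      |>.hasFDerivWithinAt
  have hlip : ∀ x₁ x₂ y₁ y₂, ‖InnerProductSpace.toDual ℝ _ (gradx f x₁ y₁) -
      InnerProductSpace.toDual ℝ _ (gradx f x₂ y₂)‖ ≤ l * (‖x₁ - x₂‖ + ‖y₁ - y₂‖) := by
    simpa only [← map_sub, LinearIsometryEquiv.norm_map] using hlipx
  have hbdd : ∀ x ∈ univ, BddAbove (range (f x)) := fun x _ =>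
    (hattain x).elim fun ys hys => ⟨f x ys, forall_mem_range.2 hys⟩
  obtain ⟨hz, hzz, hy⟩ := proximal_minimizer_lipschitz_general hl.le (hl.trans hp).le hp
    (fun y => strongConvexOn_neg_of_lipschitz_fderivWithin convex_univ (hderiv y)
      fun x _ x' _ => by simpa using hlip x x' y y)
    (fun y y' a ha b hb => sub_sub_sub_le_of_norm_fderivWithin_sub_le convex_univ (hderiv y)
      (hderiv y') (fun x _ => by simpa [dist_eq_norm] using hlip x x y y') ha hb)
    hbdd (fun _ _ => mem_univ _) (fun y z => isMinOn_univ_iff.2 (hX y z))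
    (fun _ => mem_univ _) (fun z => isMinOn_univ_iff.2 (hXz z))
  refine ⟨hz, hzz, fun y y' z => (hy y y' z).trans ?_⟩
  rw [dist_eq_norm]
  gcongr
  linarith
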